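/- arXiv:2412.16193 — 2 statements merged into one kernel-verified Lean document; each statement's English description precedes it below -/
import Mathlib

section
/- For all n ≥ 0, T_2(9n+1) ≡ 3 (mod 6) if n is a triangular number (n = m(m+1)/2 for some m ≥ 0), and T_2(9n+1) ≡ 0 (mod 6) otherwise. -/
noncomputable def Tcount (ℓ k n : ℕ) : ℕ :=
  Nat.card {f : Fin k → Σ m : ℕ, Nat.Partition m //
    (∑ i, (f i).1) = n ∧ ∀ i, ∀ p ∈ (f i).2.parts, ¬ ℓ ∣ p}

/-!
Write `F = ∑ b(n) qⁿ` for the generating function of the `2`-regular partitions, so that `F ^ 3`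
generates `T₂`. The derivative of `F ^ 3` is divisible by `3`, hence `3 ∣ N * T₂(N)` for every `N`,
and `3 ∣ T₂(9n + 1)`. Modulo `2`, Glaisher's theorem gives `F = ∏ (1 + qⁱ) = ∏ (1 - qⁱ)`, so
`∏ (1 - q ^ (2i)) = F ^ 2` and `∏ (1 - q ^ (2i - 1)) = F⁻¹`. Gauss's identity
`∏ (1 - q ^ (2i - 1)) * ψ(q) = ∏ (1 - q ^ (2i))` for `ψ(q) = ∑ q ^ (m(m + 1)/2)` then becomes
`F ^ 3 = ψ(q)`: `T₂(N)` is odd exactly when `N` is triangular. Finally, `9n + 1` is triangular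
exactly when `n` is. Gauss's identity is the limit of a finite identity due to Shanks.
-/

open Filter Finset PowerSeries
open scoped Topology PowerSeries.WithPiTopology

section Triangular

/-- The `m`-th triangular number `m * (m + 1) / 2`, with `triangular 0 = 0`. These are the
exponents of Ramanujan's theta function `ψ`. -/
def triangular (m : ℕ) : ℕ := m * (m + 1) / 2

theorem triangular_mul_two (m : ℕ) : triangular m * 2 = m * (m + 1) :=
  Nat.div_mul_cancel (Nat.even_mul_succ_self m).two_dvd

theorem triangular_succ (m : ℕ) : triangular (m + 1) = triangular m + (m + 1) := by
  linarith [triangular_mul_two m, triangular_mul_two (m + 1)]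

theorem triangular_strictMono : StrictMono triangular :=
  strictMono_nat_of_lt_succ fun m ↦ by simp [triangular_succ]

theorem triangular_two_mul (n : ℕ) : triangular (2 * n) = n * (2 * n + 1) := by
  linarith [triangular_mul_two (2 * n)]

theorem triangular_three_mul_add_one (m : ℕ) :
    triangular (3 * m + 1) = 9 * triangular m + 1 := by
  linarith [triangular_mul_two m, triangular_mul_two (3 * m + 1)]

theorem mod_three_eq_one_of_triangular_mod_three {m : ℕ} (h : triangular m % 3 = 1) :
    m % 3 = 1 := by
  have two_eq : 2 = m * (m + 1) % 3 := by rw [← triangular_mul_two]; omega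
  have m_lt : m % 3 < 3 := Nat.mod_lt _ three_pos
  rw [Nat.mul_mod, Nat.add_mod] at two_eq
  interval_cases m % 3 <;> omega

theorem nine_mul_add_one_mem_range_triangular {n : ℕ} :
    9 * n + 1 ∈ Set.range triangular ↔ n ∈ Set.range triangular := by
  constructor
  · rintro ⟨m, hm⟩
    have m_mod : m % 3 = 1 := mod_three_eq_one_of_triangular_mod_three (by omega)
    obtain ⟨k, rfl⟩ : ∃ k, m = 3 * k + 1 := ⟨m / 3, by omega⟩
    rw [triangular_three_mul_add_one] at hm
    exact ⟨k, by omega⟩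
  · rintro ⟨m, rfl⟩
    exact ⟨3 * m + 1, triangular_three_mul_add_one m⟩

end Triangular

section Shanks

variable {R : Type*} [CommRing R]

/-- The `s`-th summand of the left-hand side of Shanks's finite form of Gauss's identity:
`(q; q²)_s * (q²; q²)_n / (q²; q²)_s * q ^ (s * (2 * n + 1))`, where the quotient is written as a
product over `s ≤ r < n`. It is meaningful for `s ≤ n` only. -/
def shanksTerm (q : R) (n s : ℕ) : R :=
  (∏ r ∈ range s, (1 - q ^ (2 * r + 1))) * (∏ r ∈ Ico s n, (1 - q ^ (2 * r + 2))) *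
    q ^ (s * (2 * n + 1))

theorem shanksTerm_zero (q : R) (n : ℕ) :
    shanksTerm q n 0 = ∏ r ∈ range n, (1 - q ^ (2 * r + 2)) := by
  simp [shanksTerm]

theorem shanksTerm_self (q : R) (n : ℕ) :
    shanksTerm q n n = (∏ r ∈ range n, (1 - q ^ (2 * r + 1))) * q ^ triangular (2 * n) := by
  simp [shanksTerm, triangular_two_mul]

theorem shanksTerm_succ_left (q : R) {n s : ℕ} (hs : s ≤ n) :
    shanksTerm q (n + 1) s = shanksTerm q n s * ((1 - q ^ (2 * n + 2)) * q ^ (2 * s)) := by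
  simp only [shanksTerm, prod_Ico_succ_top hs]
  ring

theorem shanksTerm_succ_right_mul (q : R) {n s : ℕ} (hs : s < n) :
    shanksTerm q n (s + 1) * (1 - q ^ (2 * s + 2)) =
      shanksTerm q n s * ((1 - q ^ (2 * s + 1)) * q ^ (2 * n + 1)) := by
  simp only [shanksTerm, prod_range_succ, prod_eq_prod_Ico_succ_bot hs]
  ring

theorem sum_range_shanksTerm_mul (q : R) {n m : ℕ} (hm : m ≤ n) :
    ∑ s ∈ range m, shanksTerm q n s *
        ((1 - q ^ (2 * n + 2)) * q ^ (2 * s) - (1 - q ^ (2 * n + 1))) =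
      shanksTerm q n m * (1 - q ^ (2 * m)) := by
  induction m with
  | zero => simp
  | succ m ih =>
    rw [sum_range_succ, ih (by omega), mul_add_one 2 m, shanksTerm_succ_right_mul q hm]
    ring

theorem sum_shanksTerm_succ (q : R) (n : ℕ) :
    ∑ s ∈ range (n + 1), shanksTerm q (n + 1) s =
      (1 - q ^ (2 * n + 1)) *
        (∑ s ∈ range (n + 1), shanksTerm q n s + shanksTerm q n n * q ^ (2 * n + 1)) := by
  have split_term : ∀ s ∈ range (n + 1), shanksTerm q (n + 1) s =
      shanksTerm q n s * ((1 - q ^ (2 * n + 2)) * q ^ (2 * s) - (1 - q ^ (2 * n + 1))) +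
        (1 - q ^ (2 * n + 1)) * shanksTerm q n s := fun s hs ↦ by
    rw [shanksTerm_succ_left q (mem_range_succ_iff.1 hs)]
    ring
  rw [sum_congr rfl split_term, sum_add_distrib, ← mul_sum, sum_range_succ,
    sum_range_shanksTerm_mul q le_rfl]
  ring

theorem sum_shanksTerm (q : R) (n : ℕ) :
    ∑ s ∈ range (n + 1), shanksTerm q n s =
      (∏ r ∈ range n, (1 - q ^ (2 * r + 1))) * ∑ j ∈ range (2 * n + 1), q ^ triangular j := by
  induction n with
  | zero => simp [shanksTerm, triangular]
  | succ n ih =>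
    rw [sum_range_succ, sum_shanksTerm_succ, ih, shanksTerm_self, shanksTerm_self,
      prod_range_succ, mul_add_one 2 n, sum_range_succ _ (2 * n + 1 + 1),
      sum_range_succ _ (2 * n + 1), triangular_succ (2 * n + 1), triangular_succ (2 * n)]
    ring

theorem pow_dvd_shanksTerm (q : R) (n : ℕ) {s : ℕ} (hs : s ≠ 0) :
    q ^ (2 * n + 1) ∣ shanksTerm q n s :=
  dvd_mul_of_dvd_right (pow_dvd_pow q (Nat.le_mul_of_pos_left _ hs.pos)) _

theorem pow_dvd_prod_mul_sum_pow_triangular_sub_prod (q : R) (n : ℕ) :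
    q ^ (2 * n + 1) ∣
      (∏ r ∈ range n, (1 - q ^ (2 * r + 1))) * ∑ j ∈ range (2 * n + 1), q ^ triangular j -
        ∏ r ∈ range n, (1 - q ^ (2 * r + 2)) := by
  rw [← sum_shanksTerm, sum_range_succ', shanksTerm_zero, add_sub_cancel_right]
  exact dvd_sum fun s _ ↦ pow_dvd_shanksTerm q n s.succ_ne_zero

end Shanks

section Gauss

variable (R : Type*) [CommRing R]

open Classical in
/-- Ramanujan's theta function `ψ(q) = ∑ q ^ (m * (m + 1) / 2)`, as a formal power series. -/
noncomputable def ramanujanPsi : R⟦X⟧ :=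
  .mk fun n ↦ if n ∈ Set.range triangular then 1 else 0

open Classical in
theorem coeff_ramanujanPsi (n : ℕ) :
    coeff n (ramanujanPsi R) = if n ∈ Set.range triangular then 1 else 0 :=
  coeff_mk _ _

variable [TopologicalSpace R]

theorem hasSum_ramanujanPsi : HasSum (fun m ↦ (X : R⟦X⟧) ^ triangular m) (ramanujanPsi R) := by
  have hasSum_monomial := hasSum_of_monomials_self (ramanujanPsi R)
  rw [← triangular_strictMono.injective.hasSum_iff fun n hn ↦ by
    simp only [coeff_ramanujanPsi, if_neg hn, map_zero]] at hasSum_monomial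
  simpa [Function.comp_def, coeff_ramanujanPsi, ← X_pow_eq] using hasSum_monomial

variable {R} in
theorem tendsto_zero_of_X_pow_dvd {f : ℕ → R⟦X⟧} {a : ℕ → ℕ} (ha : Tendsto a atTop atTop)
    (h : ∀ n, X ^ a n ∣ f n) : Tendsto f atTop (𝓝 0) := by
  refine (WithPiTopology.tendsto_iff_coeff_tendsto R _ _ _).2 fun d ↦ ?_
  refine tendsto_const_nhds.congr' ?_
  filter_upwards [ha.eventually_gt_atTop d] with n hn
  rw [X_pow_dvd_iff.1 (h n) d hn, map_zero]

theorem multipliable_one_sub_X_pow_comp {a : ℕ → ℕ} (ha : Tendsto a atTop atTop) :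
    Multipliable fun i ↦ (1 : R⟦X⟧) - X ^ a i := by
  nontriviality R
  simp_rw [sub_eq_add_neg]
  apply WithPiTopology.multipliable_one_add_of_tendsto_order_atTop_nhds_top
  simpa only [order_neg, order_X_pow, Function.comp_def] using ENat.tendsto_natCast_nhds_top.comp ha

theorem multipliable_one_sub_X_pow_odd :
    Multipliable fun i : ℕ ↦ (1 : R⟦X⟧) - X ^ (2 * i + 1) :=
  multipliable_one_sub_X_pow_comp R
    (tendsto_atTop_mono (fun i ↦ show i ≤ 2 * i + 1 by omega) tendsto_id)

theorem multipliable_one_sub_X_pow_even :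
    Multipliable fun i : ℕ ↦ (1 : R⟦X⟧) - X ^ (2 * i + 2) :=
  multipliable_one_sub_X_pow_comp R
    (tendsto_atTop_mono (fun i ↦ show i ≤ 2 * i + 2 by omega) tendsto_id)

variable [IsTopologicalRing R] [T2Space R]

theorem tprod_one_sub_X_pow_odd_mul_even :
    (∏' i, (1 - X ^ (2 * i + 1) : R⟦X⟧)) * ∏' i, (1 - X ^ (2 * i + 2)) =
      ∏' i, (1 - X ^ (i + 1)) :=
  tprod_even_mul_odd (f := fun i ↦ (1 - X ^ (i + 1) : R⟦X⟧))
    (multipliable_one_sub_X_pow_odd R) (multipliable_one_sub_X_pow_even R)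

theorem tprod_one_sub_X_pow_odd_mul_ramanujanPsi :
    (∏' i, (1 - X ^ (2 * i + 1))) * ramanujanPsi R = ∏' i, (1 - X ^ (2 * i + 2)) := by
  have tendsto_odd := (multipliable_one_sub_X_pow_odd R).hasProd.tendsto_prod_nat
  have tendsto_even := (multipliable_one_sub_X_pow_even R).hasProd.tendsto_prod_nat
  have tendsto_index : Tendsto (fun n ↦ 2 * n + 1) atTop atTop :=
    tendsto_atTop_mono (fun n ↦ show n ≤ 2 * n + 1 by omega) tendsto_id
  have tendsto_psi := (hasSum_ramanujanPsi R).tendsto_sum_nat.comp tendsto_index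
  refine sub_eq_zero.1 (tendsto_nhds_unique ((tendsto_odd.mul tendsto_psi).sub tendsto_even) ?_)
  exact tendsto_zero_of_X_pow_dvd tendsto_index
    (pow_dvd_prod_mul_sum_pow_triangular_sub_prod X)

end Gauss

section RegularPartitions

/-- The generating function of the `ℓ`-regular partitions, i.e. those with no part divisible
by `ℓ`. -/
noncomputable def regularPartitionSeries (R : Type*) [Semiring R] (ℓ : ℕ) : R⟦X⟧ :=
  .mk fun n ↦ (#(Nat.Partition.restricted n (¬ ℓ ∣ ·)) : R)

/-- A `k`-tuple of `ℓ`-regular partitions of total size `n`, as counted by `Tcount`, is a tuple of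
sizes adding up to `n` together with an `ℓ`-regular partition of each size. -/
def regularTupleEquiv (ℓ k n : ℕ) :
    {f : Fin k → Σ m : ℕ, Nat.Partition m //
      (∑ i, (f i).1) = n ∧ ∀ i, ∀ p ∈ (f i).2.parts, ¬ ℓ ∣ p} ≃
    Σ l : (univ : Finset (Fin k)).piAntidiag n,
      ∀ i, Nat.Partition.restricted (l.1 i) (¬ ℓ ∣ ·) where
  toFun f := ⟨⟨fun i ↦ (f.1 i).1, by simpa using f.2.1⟩,
    fun i ↦ ⟨(f.1 i).2, (mem_filter_univ _).2 (f.2.2 i)⟩⟩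
  invFun a := ⟨fun i ↦ ⟨a.1.1 i, (a.2 i).1⟩, (mem_piAntidiag.1 a.1.2).1,
    fun i ↦ (mem_filter_univ _).1 (a.2 i).2⟩

theorem tcount_eq_sum_prod_card (ℓ k n : ℕ) :
    Tcount ℓ k n = ∑ l ∈ (univ : Finset (Fin k)).piAntidiag n,
      ∏ i, #(Nat.Partition.restricted (l i) (¬ ℓ ∣ ·)) := by
  rw [Tcount, Nat.card_congr (regularTupleEquiv ℓ k n), Nat.card_eq_fintype_card,
    Fintype.card_sigma, ← sum_coe_sort (univ.piAntidiag n)]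
  simp only [Fintype.card_pi, Fintype.card_coe]

theorem coeff_regularPartitionSeries_pow (R : Type*) [CommSemiring R] (ℓ k n : ℕ) :
    coeff n (regularPartitionSeries R ℓ ^ k) = Tcount ℓ k n := by
  rw [← Fin.prod_const, coeff_prod, tcount_eq_sum_prod_card]
  push_cast
  exact sum_equiv Finsupp.equivFunOnFinite (by simp) fun l _ ↦
    prod_congr rfl fun i _ ↦ coeff_mk (l i) _

theorem natCast_dvd_mul_coeff_pow {R : Type*} [CommSemiring R] (f : R⟦X⟧) (k n : ℕ) :
    (k : R) ∣ n * coeff n (f ^ k) := by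
  cases n with
  | zero => simp
  | succ n =>
    have leibniz := congrArg (coeff n) (derivative_pow f k)
    rw [coeff_derivative, mul_assoc, ← nsmul_eq_mul, map_nsmul, nsmul_eq_mul] at leibniz
    exact ⟨_, by rw [← leibniz]; push_cast; ring⟩

theorem dvd_tcount_of_coprime (ℓ : ℕ) {k n : ℕ} (h : k.Coprime n) : k ∣ Tcount ℓ k n := by
  have k_dvd := natCast_dvd_mul_coeff_pow (regularPartitionSeries ℕ ℓ) k n
  rw [coeff_regularPartitionSeries_pow] at k_dvd
  exact h.dvd_of_dvd_mul_left k_dvd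

end RegularPartitions

section Parity

variable (R : Type*) [CommRing R]

theorem regularPartitionSeries_two_eq_tprod [CharP R 2] [TopologicalSpace R] [T2Space R] :
    regularPartitionSeries R 2 = ∏' i, (1 - X ^ (i + 1)) := by
  have : CharP R⟦X⟧ 2 := charP_of_injective_ringHom C_injective 2
  simp_rw [regularPartitionSeries,
    Nat.Partition.card_restricted_eq_card_countRestricted _ Nat.two_pos,
    Nat.Partition.powerSeriesMk_card_countRestricted_eq_tprod R Nat.two_pos]
  simp [sum_range_succ, CharTwo.sub_eq_add]

theorem tprod_one_sub_X_pow_pow_char (p : ℕ) [Fact p.Prime] [CharP R p] [TopologicalSpace R]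
    [IsTopologicalRing R] [T2Space R] :
    (∏' i, (1 - X ^ (i + 1) : R⟦X⟧)) ^ p = ∏' i, (1 - X ^ (p * (i + 1))) := by
  have : CharP R⟦X⟧ p := charP_of_injective_ringHom C_injective p
  rw [← (WithPiTopology.multipliable_one_sub_X_pow R).tprod_pow]
  simp only [sub_pow_char, one_pow, ← pow_mul']

theorem regularPartitionSeries_two_pow_three [IsDomain R] [CharP R 2] :
    regularPartitionSeries R 2 ^ 3 = ramanujanPsi R := by
  let _ : TopologicalSpace R := ⊥
  have : DiscreteTopology R := ⟨rfl⟩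
  rw [regularPartitionSeries_two_eq_tprod]
  have even_eq_sq : ∏' i, (1 - X ^ (2 * i + 2) : R⟦X⟧) = (∏' i, (1 - X ^ (i + 1))) ^ 2 :=
    (tprod_one_sub_X_pow_pow_char R 2).symm
  have odd_mul_even := tprod_one_sub_X_pow_odd_mul_even R
  have gauss := tprod_one_sub_X_pow_odd_mul_ramanujanPsi R
  have euler_ne_zero := WithPiTopology.tprod_one_sub_X_pow_ne_zero R
  rw [even_eq_sq] at odd_mul_even gauss
  set P := ∏' i, (1 - X ^ (i + 1) : R⟦X⟧)
  set D := ∏' i, (1 - X ^ (2 * i + 1) : R⟦X⟧)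
  refine mul_left_cancel₀ euler_ne_zero ?_
  calc P * P ^ 3 = P ^ 2 * P ^ 2 := by ring
    _ = P ^ 2 * (D * ramanujanPsi R) := by rw [gauss]
    _ = D * P ^ 2 * ramanujanPsi R := by ring
    _ = P * ramanujanPsi R := by rw [odd_mul_even]

theorem odd_tcount_two_three_iff {n : ℕ} : Odd (Tcount 2 3 n) ↔ n ∈ Set.range triangular := by
  rw [← ZMod.natCast_eq_one_iff_odd, ← coeff_regularPartitionSeries_pow,
    regularPartitionSeries_two_pow_three, coeff_ramanujanPsi]
  simp

end Parity

theorem stmt2 (n : ℕ) :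
    (( ∃ m : ℕ, n = m * (m + 1) / 2) → Tcount 2 3 (9 * n + 1) ≡ 3 [MOD 6]) ∧
    ((¬ ∃ m : ℕ, n = m * (m + 1) / 2) → Tcount 2 3 (9 * n + 1) ≡ 0 [MOD 6]) := by
  have triangular_iff : (∃ m : ℕ, n = m * (m + 1) / 2) ↔ n ∈ Set.range triangular :=
    exists_congr fun _ ↦ eq_comm
  have three_dvd : 3 ∣ Tcount 2 3 (9 * n + 1) :=
    dvd_tcount_of_coprime 2 ((Nat.prime_three.coprime_iff_not_dvd).2 (by omega))
  have odd_iff : Odd (Tcount 2 3 (9 * n + 1)) ↔ n ∈ Set.range triangular :=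
    odd_tcount_two_three_iff.trans nine_mul_add_one_mem_range_triangular
  rw [triangular_iff, ← odd_iff, Nat.odd_iff, Nat.ModEq, Nat.ModEq]
  omega
end

section
/- For all n ≥ 0, T_2(81n+37) ≡ 0 (mod 24) and T_2(81n+64) ≡ 0 (mod 24). -/
/-
Write `D` for the generating function of 2-regular partitions and `E = ∏ (1 - Xⁱ)`, so that
`∑ T₂(n) Xⁿ = D³`. Modulo 3 this is a series in `X³`, and neither 37 nor 64 is a multiple of 3.

Modulo 8, Gauss's identity `φ(-X) D = E`, where `φ(-X) = ∑ (-1)ᵏ X^(k²) ≡ 1 mod 2`, gives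
`D³ ≡ φ(-X)⁴ D³ = φ(-X) E³`. By Jacobi's identity `E³ = ∑ (4m + 1) X^(m(2m + 1))` over all integers
`m`, the coefficient of `X^N` in `φ(-X) E³` is a weighted sum over the elements of norm `8N + 1` of
`ℤ[√-2]`. For the exponents in question `8N + 1 = 27M` with `M ≡ 3 mod 8` prime to 3. Since 3 splits
as `ππ̄` with `π = 1 + √-2`, the elements of norm `27M` are the `π³β`, `π²π̄β`, `ππ̄²β`, `π̄³β` with
`β` of norm `M`. For each `β = x + y√-2` the weights of these four elements add up to `0` or `±8y`.

Both theta identities come from the Jacobi triple product, obtained as the limit of the `q`-binomial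
theorem; for Jacobi's it is applied over the dual numbers.
-/

open PowerSeries Finset Filter
open scoped Topology PowerSeries.WithPiTopology

section GeneratingFunction

/-- The power series `∑ bₗ(n) Xⁿ`, where `bₗ(n)` is the number of `ℓ`-regular partitions of `n`. -/
noncomputable def regularGenFun (R : Type*) [Semiring R] (ℓ : ℕ) : R⟦X⟧ :=
  PowerSeries.mk fun n => ((Nat.Partition.restricted n (¬ ℓ ∣ ·)).card : R)

theorem Tcount_eq_sum_piAntidiag (ℓ k n : ℕ) :
    Tcount ℓ k n = ∑ g ∈ piAntidiag (univ : Finset (Fin k)) n,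
      ∏ i, (Nat.Partition.restricted (g i) (¬ ℓ ∣ ·)).card := by
  let sizesEquiv : {f : Fin k → Σ m : ℕ, Nat.Partition m //
      (∑ i, (f i).1) = n ∧ ∀ i, ∀ p ∈ (f i).2.parts, ¬ ℓ ∣ p} ≃
      Σ g : {g : Fin k → ℕ // g ∈ piAntidiag univ n},
        ∀ i, {p // p ∈ Nat.Partition.restricted (g.1 i) (¬ ℓ ∣ ·)} :=
    { toFun f := ⟨⟨fun i => (f.1 i).1, by simpa using f.2.1⟩,
        fun i => ⟨(f.1 i).2, by simpa [Nat.Partition.restricted] using f.2.2 i⟩⟩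
      invFun g := ⟨fun i => ⟨g.1.1 i, (g.2 i).1⟩, (mem_piAntidiag.1 g.1.2).1,
        fun i => (mem_filter.1 (g.2 i).2).2⟩
      left_inv _ := rfl
      right_inv _ := rfl }
  rw [Tcount, Nat.card_congr sizesEquiv, Nat.card_sigma, ← sum_coe_sort (piAntidiag _ n)]
  simp only [Nat.card_pi, Nat.card_eq_finsetCard]

theorem coeff_pow_eq_sum_piAntidiag {R : Type*} [CommSemiring R] (f : R⟦X⟧) (k n : ℕ) :
    coeff n (f ^ k) = ∑ g ∈ piAntidiag (univ : Finset (Fin k)) n, ∏ i, coeff (g i) f := by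
  rw [← Fin.prod_const, coeff_prod]
  refine sum_nbij' (⇑·) Finsupp.equivFunOnFinite.symm ?_ ?_ ?_ ?_ fun _ _ => rfl <;>
    simp [mem_finsuppAntidiag]

theorem coeff_regularGenFun_pow (R : Type*) [CommSemiring R] (ℓ k n : ℕ) :
    coeff n (regularGenFun R ℓ ^ k) = Tcount ℓ k n := by
  simp [coeff_pow_eq_sum_piAntidiag, Tcount_eq_sum_piAntidiag, regularGenFun]

end GeneratingFunction

theorem coeff_pow_prime_of_not_dvd {p n : ℕ} [Fact p.Prime] (h : ¬ p ∣ n) (f : (ZMod p)⟦X⟧) :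
    coeff n (f ^ p) = 0 := by
  have hp : p ≠ 0 := (Fact.out : p.Prime).ne_zero
  have hpow : MvPowerSeries.expand p hp f = f ^ p := by
    simpa [ZMod.frobenius_zmod, MvPowerSeries.map_id] using
      MvPowerSeries.map_frobenius_expand p hp (f := f)
  rw [show f ^ p = expand p hp f from hpow.symm, coeff_expand_of_not_dvd p hp f h]

theorem prime_dvd_Tcount {p n : ℕ} (hp : p.Prime) (h : ¬ p ∣ n) (ℓ : ℕ) : p ∣ Tcount ℓ p n := by
  have : Fact p.Prime := ⟨hp⟩
  rw [← CharP.cast_eq_zero_iff (ZMod p) p, ← coeff_regularGenFun_pow, coeff_pow_prime_of_not_dvd h]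

section GaussianBinomial

variable {R : Type*} [CommRing R]

/-- The Gaussian binomial coefficient `[n, k]_q`. The `q`-Pascal rule, unlike the quotient of
`q`-factorials, makes sense for every element `q` of every commutative ring. -/
def gaussBinom (q : R) : ℕ → ℕ → R
  | _, 0 => 1
  | 0, _ + 1 => 0
  | n + 1, k + 1 => gaussBinom q n k + q ^ (k + 1) * gaussBinom q n (k + 1)

/-- The `q`-Pochhammer symbol `(q; q)ₙ = (1 - q)(1 - q²)⋯(1 - qⁿ)`. -/
def qPoch (q : R) (n : ℕ) : R := ∏ i ∈ range n, (1 - q ^ (i + 1))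

theorem qPoch_succ (q : R) (n : ℕ) : qPoch q (n + 1) = qPoch q n * (1 - q ^ (n + 1)) :=
  prod_range_succ _ n

theorem gaussBinom_zero_right (q : R) (n : ℕ) : gaussBinom q n 0 = 1 := by
  cases n <;> rfl

theorem gaussBinom_succ_succ (q : R) (n k : ℕ) :
    gaussBinom q (n + 1) (k + 1) = gaussBinom q n k + q ^ (k + 1) * gaussBinom q n (k + 1) := rfl

theorem gaussBinom_eq_zero_of_lt (q : R) {n k : ℕ} (h : n < k) : gaussBinom q n k = 0 := by
  induction n generalizing k with
  | zero => obtain ⟨k, rfl⟩ := Nat.exists_eq_add_one_of_ne_zero h.ne'; rfl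
  | succ n ih =>
    obtain ⟨k, rfl⟩ := Nat.exists_eq_add_one_of_ne_zero (Nat.ne_zero_of_lt h)
    rw [gaussBinom_succ_succ, ih (by omega), ih (by omega), mul_zero, add_zero]

theorem gaussBinom_self (q : R) (n : ℕ) : gaussBinom q n n = 1 := by
  induction n with
  | zero => rfl
  | succ n ih => rw [gaussBinom_succ_succ, ih, gaussBinom_eq_zero_of_lt q n.lt_succ_self]; simp

theorem gaussBinom_mul_qPoch_mul_qPoch (q : R) (k n : ℕ) :
    gaussBinom q (k + n) k * (qPoch q k * qPoch q n) = qPoch q (k + n) := by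
  induction k generalizing n with
  | zero => simp [gaussBinom_zero_right, qPoch]
  | succ k ihk =>
    induction n with
    | zero => simp [gaussBinom_self, qPoch]
    | succ n ihn =>
      have hk := ihk (n + 1)
      rw [← add_assoc, qPoch_succ] at hk
      rw [add_right_comm, qPoch_succ] at ihn
      rw [← add_assoc, add_right_comm k 1 n, gaussBinom_succ_succ]
      simp only [qPoch_succ] at hk ihn ⊢
      linear_combination (1 - q ^ (k + 1)) * hk + q ^ (k + 1) * (1 - q ^ (n + 1)) * ihn

theorem prod_one_add_mul_pow_eq_sum_gaussBinom (q z : R) (n : ℕ) :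
    ∏ i ∈ range n, (1 + z * q ^ i) =
      ∑ j ∈ range (n + 1), q ^ (j.choose 2) * z ^ j * gaussBinom q n j := by
  induction n generalizing z with
  | zero => simp [gaussBinom]
  | succ n ih =>
    have hprod : ∏ i ∈ range n, (1 + z * q ^ (i + 1)) = ∏ i ∈ range n, (1 + z * q * q ^ i) :=
      prod_congr rfl fun i _ => by ring
    have hpascal (j : ℕ) : q ^ (j + 1).choose 2 * z ^ (j + 1) * gaussBinom q (n + 1) (j + 1) =
        z * (q ^ j.choose 2 * (z * q) ^ j * gaussBinom q n j) +
          q ^ (j + 1).choose 2 * (z * q) ^ (j + 1) * gaussBinom q n (j + 1) := by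
      rw [gaussBinom_succ_succ, Nat.choose_succ_succ', Nat.choose_one_right]
      ring
    have hshift : ∑ j ∈ range (n + 1), q ^ (j + 1).choose 2 * (z * q) ^ (j + 1) *
        gaussBinom q n (j + 1) + 1 =
          ∑ j ∈ range (n + 1), q ^ j.choose 2 * (z * q) ^ j * gaussBinom q n j := by
      rw [sum_range_succ, gaussBinom_eq_zero_of_lt q n.lt_succ_self, sum_range_succ' _ n]
      simp [gaussBinom_zero_right]
    rw [prod_range_succ', hprod, ih, sum_range_succ' _ (n + 1), sum_congr rfl fun j _ => hpascal j,
      sum_add_distrib, ← mul_sum]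
    simp only [Nat.choose_zero_succ, pow_zero, gaussBinom_zero_right, mul_one]
    linear_combination -hshift

end GaussianBinomial

section TripleProduct

/-- The triangular number `k(k + 1)/2` of an integer `k`. -/
def triangle (k : ℤ) : ℕ := (k * (k + 1) / 2).toNat

theorem two_mul_triangle (k : ℤ) : 2 * (triangle k : ℤ) = k * (k + 1) := by
  have hpos : 0 ≤ k * (k + 1) := by
    rcases le_or_gt 0 k with hk | hk <;> nlinarith
  have heven := (Int.even_mul_succ_self k).two_dvd
  rw [triangle]
  omega

theorem triangle_natCast (n : ℕ) : triangle n = (n + 1).choose 2 := by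
  rw [triangle, Nat.choose_two_right, Nat.add_sub_cancel, mul_comm]
  norm_cast

theorem triangle_neg_add (k : ℤ) : (triangle (-k) : ℤ) + k = triangle k := by
  linarith [two_mul_triangle k, two_mul_triangle (-k)]

theorem triangle_add_triangle_neg (k : ℤ) : triangle k + triangle (-k) = k.natAbs ^ 2 := by
  have h₁ := two_mul_triangle k
  have h₂ := two_mul_triangle (-k)
  zify
  rw [sq_abs]
  linarith

theorem natAbs_le_triangle_add_one (k : ℤ) : k.natAbs ≤ triangle k + 1 := by
  have := two_mul_triangle k
  zify
  rcases abs_cases k with ⟨hk, _⟩ | ⟨hk, _⟩ <;> nlinarith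

variable {R : Type*} [CommRing R]

/-- The term `a^(k(k+1)/2) b^(k(k-1)/2)` of Ramanujan's theta function `f(a, b)`. -/
def thetaTerm (a b : R) (k : ℤ) : R := a ^ triangle k * b ^ triangle (-k)

theorem thetaTerm_natCast (a b : R) (j : ℕ) :
    thetaTerm a b j = (a * b) ^ j.choose 2 * a ^ j := by
  have hsucc : triangle j = j.choose 2 + j := by
    rw [triangle_natCast, Nat.choose_succ_succ', Nat.choose_one_right, add_comm]
  have hpred : triangle (-j) = j.choose 2 := by
    have := triangle_neg_add j
    omega
  rw [thetaTerm, hsucc, hpred]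
  ring

theorem thetaTerm_sub_one (a b : R) (n i : ℕ) :
    thetaTerm a b (i - n - 1) * (a * b) ^ i = b * (a * b) ^ n * thetaTerm a b (i - n) := by
  have h₁ := two_mul_triangle (i - n)
  have h₂ := two_mul_triangle (-(i - n))
  have h₃ := two_mul_triangle (i - n - 1)
  have h₄ := two_mul_triangle (-(i - n - 1))
  have ha : triangle (i - n - 1) + i = n + triangle (i - n) := by zify; linarith
  have hb : triangle (-(i - n - 1)) + i = n + 1 + triangle (-(i - n)) := by zify; linarith
  calc thetaTerm a b (i - n - 1) * (a * b) ^ i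
      = a ^ (triangle (i - n - 1) + i) * b ^ (triangle (-(i - n - 1)) + i) := by
        rw [thetaTerm]; ring
    _ = b * (a * b) ^ n * thetaTerm a b (i - n) := by rw [ha, hb, thetaTerm]; ring

theorem prod_mul_prod_eq_sum_range_thetaTerm (a b : R) (m n : ℕ) :
    (∏ i ∈ range m, (1 + a * (a * b) ^ i)) * ∏ i ∈ range n, (1 + b * (a * b) ^ i) =
      ∑ j ∈ range (m + n + 1), thetaTerm a b (j - n) * gaussBinom (a * b) (m + n) j := by
  induction n with
  | zero => simp [prod_one_add_mul_pow_eq_sum_gaussBinom, thetaTerm_natCast]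
  | succ n ih =>
    have hpascal (j : ℕ) : thetaTerm a b ((j + 1 : ℕ) - (n + 1 : ℕ)) *
        gaussBinom (a * b) (m + n + 1) (j + 1) =
        thetaTerm a b (j - n) * gaussBinom (a * b) (m + n) j +
          thetaTerm a b ((j + 1 : ℕ) - n - 1) * (a * b) ^ (j + 1) *
            gaussBinom (a * b) (m + n) (j + 1) := by
      rw [gaussBinom_succ_succ]
      push_cast
      ring_nf
    have hshift : ∑ j ∈ range (m + n + 1), thetaTerm a b ((j + 1 : ℕ) - n - 1) *
        (a * b) ^ (j + 1) * gaussBinom (a * b) (m + n) (j + 1) + thetaTerm a b (-n - 1) =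
          b * (a * b) ^ n *
            ∑ j ∈ range (m + n + 1), thetaTerm a b (j - n) * gaussBinom (a * b) (m + n) j := by
      rw [sum_range_succ, gaussBinom_eq_zero_of_lt _ (m + n).lt_succ_self, mul_zero, add_zero]
      simp only [mul_sum, ← mul_assoc, ← thetaTerm_sub_one]
      rw [sum_range_succ' _ (m + n)]
      simp [gaussBinom_zero_right]
    rw [prod_range_succ, ← mul_assoc, ih, ← add_assoc,
      sum_range_succ' _ (m + n + 1), sum_congr rfl fun j _ => hpascal j,
      sum_add_distrib, gaussBinom_zero_right, mul_one]
    have h0 : thetaTerm a b ((0 : ℕ) - (n + 1 : ℕ)) = thetaTerm a b (-n - 1) := by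
      push_cast; ring_nf
    rw [h0]
    linear_combination -hshift

theorem prod_mul_prod_eq_sum_Icc_thetaTerm (a b : R) (n : ℕ) :
    (∏ i ∈ range n, (1 + a * (a * b) ^ i)) * ∏ i ∈ range n, (1 + b * (a * b) ^ i) =
      ∑ k ∈ Icc (-n : ℤ) n, thetaTerm a b k * gaussBinom (a * b) (2 * n) (n + k).toNat := by
  rw [prod_mul_prod_eq_sum_range_thetaTerm, ← two_mul]
  refine sum_nbij' (fun j => (j : ℤ) - n) (fun k => (n + k).toNat) ?_ ?_ ?_ ?_ ?_ <;> intro j hj <;>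
    simp only [mem_range, mem_Icc] at hj ⊢
  case refine_5 => congr 2; omega
  all_goals omega

end TripleProduct

section Convergence

variable {R : Type*} [CommRing R] [TopologicalSpace R]

theorem multipliable_one_add_of_X_pow_dvd {f : ℕ → R⟦X⟧} (hf : ∀ i, X ^ i ∣ f i) :
    Multipliable (1 + f ·) := by
  refine PowerSeries.WithPiTopology.multipliable_one_add_of_tendsto_order_atTop_nhds_top _ ?_
  refine ENat.tendsto_nhds_top_iff_natCast_lt.2 fun n => ?_
  filter_upwards [eventually_gt_atTop n] with i hi
  exact (Nat.cast_lt.2 hi).trans_le (nat_le_order _ _ (X_pow_dvd_iff.1 (hf i)))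

theorem multipliable_one_add_mul_pow {q : R⟦X⟧} (hq : constantCoeff q = 0) (z : R⟦X⟧) :
    Multipliable fun i : ℕ => 1 + z * q ^ i :=
  multipliable_one_add_of_X_pow_dvd fun i => (pow_dvd_pow_of_dvd (X_dvd_iff.2 hq) i).mul_left z

theorem multipliable_one_sub_pow_succ {q : R⟦X⟧} (hq : constantCoeff q = 0) :
    Multipliable fun i : ℕ => 1 - q ^ (i + 1) := by
  simp only [sub_eq_add_neg]
  refine multipliable_one_add_of_X_pow_dvd fun i => dvd_neg.2 ?_
  exact (pow_dvd_pow_of_dvd (X_dvd_iff.2 hq) i).trans (pow_dvd_pow q i.le_succ)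

variable [DiscreteTopology R]

theorem tendsto_nhds_iff_eventually_X_pow_dvd {ι : Type*} {l : Filter ι} {f : ι → R⟦X⟧}
    {g : R⟦X⟧} : Tendsto f l (𝓝 g) ↔ ∀ d, ∀ᶠ i in l, X ^ d ∣ f i - g := by
  simp only [PowerSeries.WithPiTopology.tendsto_iff_coeff_tendsto, nhds_discrete, tendsto_pure,
    X_pow_dvd_iff, map_sub, sub_eq_zero]
  refine ⟨fun h d => ?_, fun h d => (h (d + 1)).mono fun i hi => hi d d.lt_succ_self⟩
  simpa using (eventually_all_finset (range d)).2 fun m _ => h m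

theorem summable_iff_finite_not_X_pow_dvd {ι : Type*} {f : ι → R⟦X⟧} :
    Summable f ↔ ∀ d, {i | ¬ X ^ d ∣ f i}.Finite := by
  constructor
  · intro hf d
    have := tendsto_nhds_iff_eventually_X_pow_dvd.1 hf.tendsto_cofinite_zero d
    simpa only [sub_zero, eventually_cofinite] using this
  · intro hf
    rw [PowerSeries.WithPiTopology.summable_iff_summable_coeff]
    intro d
    refine summable_of_hasFiniteSupport ((hf (d + 1)).subset fun i hi hdvd => hi ?_)
    exact X_pow_dvd_iff.1 hdvd d d.lt_succ_self

theorem hasSum_powerSeries_mul {ι κ : Type*} {f : ι → R⟦X⟧} {g : κ → R⟦X⟧} {a b : R⟦X⟧}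
    (hf : HasSum f a) (hg : HasSum g b) :
    HasSum (fun p : ι × κ => f p.1 * g p.2) (a * b) := by
  refine hf.mul hg (summable_iff_finite_not_X_pow_dvd.2 fun d => ?_)
  refine ((summable_iff_finite_not_X_pow_dvd.1 hf.summable d).prod
    (summable_iff_finite_not_X_pow_dvd.1 hg.summable d)).subset fun p hp => ?_
  exact ⟨fun h => hp (h.mul_right _), fun h => hp (h.mul_left _)⟩

theorem tendsto_sum_mul_of_tendsto_one {ι κ : Type*} {l : Filter ι} {s : ι → Finset κ}
    (hs : Tendsto s l atTop) {f : κ → R⟦X⟧} (hf : Summable f) {g : ι → κ → R⟦X⟧}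
    (hg : ∀ k, Tendsto (g · k) l (𝓝 1)) :
    Tendsto (fun i => ∑ k ∈ s i, f k * g i k) l (𝓝 (∑' k, f k)) := by
  refine tendsto_nhds_iff_eventually_X_pow_dvd.2 fun d => ?_
  have hpartial := tendsto_nhds_iff_eventually_X_pow_dvd.1 (hf.hasSum.comp hs) d
  have hfactor : ∀ᶠ i in l, ∀ k ∈ {k | ¬ X ^ d ∣ f k}, X ^ d ∣ g i k - 1 :=
    (eventually_all_finite (summable_iff_finite_not_X_pow_dvd.1 hf d)).2 fun k _ =>
      tendsto_nhds_iff_eventually_X_pow_dvd.1 (hg k) d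
  filter_upwards [hpartial, hfactor] with i hi hgi
  have hsplit : ∑ k ∈ s i, f k * g i k - ∑' k, f k =
      ∑ k ∈ s i, f k * (g i k - 1) + (∑ k ∈ s i, f k - ∑' k, f k) := by
    simp only [mul_sub_one, sum_sub_distrib]
    ring
  rw [hsplit]
  refine dvd_add (dvd_sum fun k _ => ?_) hi
  by_cases hk : X ^ d ∣ f k
  · exact hk.mul_right _
  · exact (hgi k hk).mul_left _

end Convergence

section EulerProduct

variable {R : Type*} [CommRing R] [TopologicalSpace R] {q : R⟦X⟧}

/-- The Euler product `(q; q)_∞ = ∏ (1 - qⁱ)` over `i ≥ 1`, for a power series `q`. -/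
noncomputable def eulerProd (q : R⟦X⟧) : R⟦X⟧ := ∏' i : ℕ, (1 - q ^ (i + 1))

theorem tendsto_qPoch_eulerProd (hq : constantCoeff q = 0) :
    Tendsto (qPoch q) atTop (𝓝 (eulerProd q)) :=
  (multipliable_one_sub_pow_succ hq).hasProd.tendsto_prod_nat

variable [DiscreteTopology R]

theorem isUnit_eulerProd (hq : constantCoeff q = 0) : IsUnit (eulerProd q) := by
  have hlim := ((PowerSeries.WithPiTopology.continuous_constantCoeff R).tendsto _).comp
    (tendsto_qPoch_eulerProd hq)
  have hconst : constantCoeff ∘ qPoch q = fun _ => 1 := by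
    ext n
    simp [qPoch, hq]
  rw [hconst] at hlim
  rw [isUnit_iff_constantCoeff, tendsto_nhds_unique hlim tendsto_const_nhds]
  exact isUnit_one

theorem tendsto_gaussBinom_mul_eulerProd (hq : constantCoeff q = 0) (k : ℤ) :
    Tendsto (fun n : ℕ => gaussBinom q (2 * n) (n + k).toNat * eulerProd q) atTop (𝓝 1) := by
  refine tendsto_nhds_iff_eventually_X_pow_dvd.2 fun d => ?_
  have hE := tendsto_qPoch_eulerProd hq
  have hplus : Tendsto (fun n : ℕ => (n + k).toNat) atTop atTop :=
    tendsto_atTop.2 fun m => (eventually_ge_atTop (m + k.natAbs)).mono fun n hn => by omega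
  have hminus : Tendsto (fun n : ℕ => (n - k).toNat) atTop atTop :=
    tendsto_atTop.2 fun m => (eventually_ge_atTop (m + k.natAbs)).mono fun n hn => by omega
  have htwo : Tendsto (fun n : ℕ => 2 * n) atTop atTop := tendsto_id.const_mul_atTop' two_pos
  have hden := tendsto_nhds_iff_eventually_X_pow_dvd.1 ((hE.comp hplus).mul (hE.comp hminus)) d
  have hnum := tendsto_nhds_iff_eventually_X_pow_dvd.1 (hE.comp htwo) d
  filter_upwards [hden, hnum, eventually_ge_atTop k.natAbs] with n hden hnum hn
  have hquot := gaussBinom_mul_qPoch_mul_qPoch q (n + k).toNat (n - k).toNat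
  rw [show (n + k).toNat + (n - k).toNat = 2 * n by omega] at hquot
  rw [← (isUnit_eulerProd hq).dvd_mul_left]
  have hsplit : eulerProd q * (gaussBinom q (2 * n) (n + k).toNat * eulerProd q - 1) =
      (qPoch q (2 * n) - eulerProd q) - gaussBinom q (2 * n) (n + k).toNat *
        (qPoch q (n + k).toNat * qPoch q (n - k).toNat - eulerProd q * eulerProd q) := by
    rw [← hquot]
    ring
  rw [hsplit]
  exact dvd_sub hnum (hden.mul_left _)

theorem hasSum_mul_eulerProd (hq : constantCoeff q = 0) {θ : ℤ → R⟦X⟧} (hθ : Summable θ)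
    {F : R⟦X⟧} (hF : Tendsto (fun n : ℕ =>
      ∑ k ∈ Icc (-n : ℤ) n, θ k * gaussBinom q (2 * n) (n + k).toNat) atTop (𝓝 F)) :
    HasSum θ (F * eulerProd q) := by
  have hIcc : Tendsto (fun n : ℕ => Icc (-n : ℤ) n) atTop atTop := tendsto_Icc_neg
  have hsum := tendsto_sum_mul_of_tendsto_one hIcc hθ (tendsto_gaussBinom_mul_eulerProd hq)
  simp only [← mul_assoc, ← sum_mul] at hsum
  rw [tendsto_nhds_unique (hF.mul_const (eulerProd q)) hsum]
  exact hθ.hasSum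

end EulerProduct

section JacobiTripleProduct

variable {R : Type*} [CommRing R] [TopologicalSpace R] [DiscreteTopology R]

theorem summable_thetaTerm {a b : R⟦X⟧} (hab : constantCoeff (a * b) = 0) :
    Summable (thetaTerm a b) := by
  refine summable_iff_finite_not_X_pow_dvd.2 fun d =>
    (Set.finite_Icc (-d - 1 : ℤ) (d + 1)).subset fun k hk => ?_
  by_contra hlarge
  have hd : d ≤ min (triangle k) (triangle (-k)) := by
    have h₁ := natAbs_le_triangle_add_one k
    have h₂ := natAbs_le_triangle_add_one (-k)
    simp only [Set.mem_Icc] at hlarge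
    omega
  refine hk ((pow_dvd_pow X hd).trans ((pow_dvd_pow_of_dvd (X_dvd_iff.2 hab) _).trans ?_))
  rw [mul_pow, thetaTerm]
  exact mul_dvd_mul (pow_dvd_pow a (min_le_left ..)) (pow_dvd_pow b (min_le_right ..))

theorem hasSum_thetaTerm {a b : R⟦X⟧} (hab : constantCoeff (a * b) = 0) :
    HasSum (thetaTerm a b) ((∏' i : ℕ, (1 + a * (a * b) ^ i)) *
      (∏' i : ℕ, (1 + b * (a * b) ^ i)) * eulerProd (a * b)) := by
  refine hasSum_mul_eulerProd hab (summable_thetaTerm hab) ?_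
  simp only [← prod_mul_prod_eq_sum_Icc_thetaTerm]
  exact (multipliable_one_add_mul_pow hab a).hasProd.tendsto_prod_nat.mul
    (multipliable_one_add_mul_pow hab b).hasProd.tendsto_prod_nat

end JacobiTripleProduct

section Gauss

theorem neg_one_pow_natAbs_sq (R : Type*) [CommRing R] (k : ℤ) :
    (-1 : R) ^ (k.natAbs ^ 2) = (-1) ^ k.natAbs :=
  neg_one_pow_congr (Nat.even_pow' two_ne_zero)

theorem one_add_neg_X_mul_sq_pow (R : Type*) [CommRing R] (i : ℕ) :
    1 + -X * (X ^ 2) ^ i = (1 - X ^ (2 * i + 1) : R⟦X⟧) := by ring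

variable (R : Type*) [CommRing R] [TopologicalSpace R] [DiscreteTopology R]

theorem hasSum_neg_one_pow_mul_X_pow_sq :
    HasSum (fun k : ℤ => (-1) ^ k.natAbs * (X : R⟦X⟧) ^ (k.natAbs ^ 2))
      ((∏' i : ℕ, (1 - X ^ (2 * i + 1))) ^ 2 * eulerProd (X ^ 2)) := by
  have hterm : thetaTerm (-X) (-X) =
      fun k => (-1) ^ k.natAbs * (X : R⟦X⟧) ^ (k.natAbs ^ 2) := by
    ext1 k
    rw [thetaTerm, ← pow_add, triangle_add_triangle_neg, neg_pow, neg_one_pow_natAbs_sq]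
  have hsq : (-X * -X : R⟦X⟧) = X ^ 2 := by ring
  have h := hasSum_thetaTerm (a := (-X : R⟦X⟧)) (b := -X) (by simp)
  rw [hterm, hsq, ← sq] at h
  simpa only [one_add_neg_X_mul_sq_pow] using h

theorem tprod_one_sub_X_pow_odd_mul_eulerProd :
    (∏' i : ℕ, (1 - X ^ (2 * i + 1))) * eulerProd (X ^ 2 : R⟦X⟧) = eulerProd X := by
  have hodd := multipliable_one_add_mul_pow (q := (X ^ 2 : R⟦X⟧)) (by simp) (-X)
  have heven := multipliable_one_sub_pow_succ (q := (X ^ 2 : R⟦X⟧)) (by simp)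
  simp only [one_add_neg_X_mul_sq_pow] at hodd
  simp only [eulerProd, ← pow_mul] at heven ⊢
  exact tprod_even_mul_odd (f := fun i => (1 - X ^ (i + 1) : R⟦X⟧)) hodd heven

theorem regularGenFun_two_mul_eulerProd [NoZeroDivisors R] :
    regularGenFun R 2 * eulerProd X = eulerProd (X ^ 2) := by
  have hprod := Nat.Partition.multipliable_powerSeriesMk_card_countRestricted R 2
  rw [regularGenFun,
    Nat.Partition.powerSeriesMk_card_restricted_eq_powerSeriesMk_card_countRestricted R two_pos,
    Nat.Partition.powerSeriesMk_card_countRestricted_eq_tprod R two_pos, eulerProd,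
    ← hprod.tprod_mul (multipliable_one_sub_pow_succ constantCoeff_X), eulerProd]
  refine tprod_congr fun i => ?_
  rw [sum_range_succ, sum_range_one]
  ring

/-- Gauss's theta series `φ(-X) = ∑ (-1)ᵏ X^(k²)` over all integers `k`. -/
noncomputable def gaussTheta : R⟦X⟧ := ∑' k : ℤ, (-1) ^ k.natAbs * (X : R⟦X⟧) ^ (k.natAbs ^ 2)

theorem hasSum_gaussTheta :
    HasSum (fun k : ℤ => (-1) ^ k.natAbs * (X : R⟦X⟧) ^ (k.natAbs ^ 2)) (gaussTheta R) :=
  (hasSum_neg_one_pow_mul_X_pow_sq R).summable.hasSum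

theorem gaussTheta_mul_regularGenFun_two [NoZeroDivisors R] :
    gaussTheta R * regularGenFun R 2 = eulerProd X := by
  have hunit : IsUnit (eulerProd (X : R⟦X⟧)) := isUnit_eulerProd constantCoeff_X
  rw [← hunit.mul_left_inj, gaussTheta, (hasSum_neg_one_pow_mul_X_pow_sq R).tsum_eq, mul_assoc,
    regularGenFun_two_mul_eulerProd, ← tprod_one_sub_X_pow_odd_mul_eulerProd]
  ring

theorem exists_gaussTheta_eq_one_add_two_mul : ∃ s : R⟦X⟧, gaussTheta R = 1 + 2 * s := by
  have hfold := (hasSum_gaussTheta R).nat_add_neg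
  have hnat : Summable fun n : ℕ => (-1) ^ n * (X : R⟦X⟧) ^ (n ^ 2) :=
    summable_iff_finite_not_X_pow_dvd.2 fun d => by
      simpa using (summable_iff_finite_not_X_pow_dvd.1 (hasSum_gaussTheta R).summable d).preimage
        Nat.cast_injective.injOn
  simp only [Int.natAbs_neg, ← two_mul, Int.natAbs_natCast, Int.natAbs_zero, pow_zero, one_mul,
    zero_pow two_ne_zero] at hfold
  have hdouble := hfold.unique (hnat.hasSum.mul_left 2)
  exact ⟨∑' n : ℕ, (-1) ^ n * X ^ (n ^ 2) - 1, by linear_combination hdouble⟩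

end Gauss

section JacobiCube

theorem continuous_powerSeries_map {R S : Type*} [CommRing R] [TopologicalSpace R]
    [CommRing S] [TopologicalSpace S] {f : R →+* S} (hf : Continuous f) :
    Continuous (PowerSeries.map f) := by
  refine continuous_iff_continuousAt.2 fun g => ?_
  refine (PowerSeries.WithPiTopology.tendsto_iff_coeff_tendsto _ _ _ _).2 fun d => ?_
  simp only [coeff_map]
  exact (hf.comp (PowerSeries.WithPiTopology.continuous_coeff R d)).continuousAt

theorem map_eulerProd {R S : Type*} [CommRing R] [TopologicalSpace R] [CommRing S]
    [TopologicalSpace S] [T2Space S] {f : R →+* S} (hf : Continuous f) {q : R⟦X⟧}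
    (hq : constantCoeff q = 0) : map f (eulerProd q) = eulerProd (map f q) := by
  rw [eulerProd, (multipliable_one_sub_pow_succ hq).map_tprod _ (continuous_powerSeries_map hf)]
  simp [eulerProd]

variable (R : Type*) [CommRing R]

open DualNumber

theorem thetaTerm_dualNumber (k : ℤ) :
    thetaTerm (-(C (1 + ε) * X)) (-C (1 - ε)) k =
      C ((-1) ^ k.natAbs * (1 + (k : R[ε]) * ε)) * X ^ triangle k := by
  have hε : (1 + ε) ^ triangle k * (1 - ε) ^ triangle (-k) = 1 + (k : R[ε]) * ε := by
    have hk : (triangle (-k) : R) + k = triangle k :=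
      mod_cast congrArg (Int.cast (R := R)) (triangle_neg_add k)
    ext <;> simp [TrivSqZeroExt.fst_pow, TrivSqZeroExt.snd_pow, ← hk]
  rw [← hε, ← neg_one_pow_natAbs_sq, ← triangle_add_triangle_neg, thetaTerm]
  simp only [neg_pow (_ * _), neg_pow (C _), mul_pow, map_mul, map_pow, map_neg, map_one, pow_add]
  ring

-- For `a = -(1 + ε)X` and `b = -(1 - ε)` with `ε² = 0` we have `ab = X`, and `1 + b = ε` divides
-- the triple product, whose `ε`-component is therefore the cube of the Euler product over `R`.
theorem tprod_mul_tprod_dualNumber [TopologicalSpace R[ε]] [DiscreteTopology R[ε]] :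
    (∏' i : ℕ, (1 + -(C (1 + ε) * X) * X ^ i)) * (∏' i : ℕ, (1 + -C (1 - ε) * X ^ i)) =
      C ε * eulerProd (X : R[ε]⟦X⟧) ^ 2 := by
  have hX : constantCoeff (X : R[ε]⟦X⟧) = 0 := constantCoeff_X
  have hplus := multipliable_one_add_mul_pow hX (-(C (1 + ε) * X))
  have hminus := multipliable_one_add_mul_pow hX (-(C (1 - ε) * X))
  have hsplit : ∏' i : ℕ, (1 + -C (1 - ε) * X ^ i) =
      C ε * ∏' i : ℕ, (1 + -(C (1 - ε) * X) * (X : R[ε]⟦X⟧) ^ i) := by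
    have hsucc (i : ℕ) : 1 + -C (1 - ε) * X ^ (i + 1) =
        1 + -(C (1 - ε) * X) * (X : R[ε]⟦X⟧) ^ i := by ring
    rw [tprod_eq_zero_mul' (by simpa only [hsucc] using hminus), tprod_congr hsucc]
    congr 1
    simp
  have hε : (C ε * C ε : R[ε]⟦X⟧) = 0 := by rw [← map_mul, eps_mul_eps, map_zero]
  have hfactor (i : ℕ) : (1 + -(C (1 + ε) * X) * X ^ i) * (1 + -(C (1 - ε) * X) * X ^ i) =
      (1 - (X : R[ε]⟦X⟧) ^ (i + 1)) ^ 2 := by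
    simp only [map_add, map_sub, map_one]
    linear_combination -(X ^ (2 * i + 2)) * hε
  rw [hsplit, mul_left_comm, ← hplus.tprod_mul hminus, tprod_congr hfactor, eulerProd,
    (multipliable_one_sub_pow_succ hX).tprod_pow]

variable [TopologicalSpace R] [DiscreteTopology R]

theorem hasSum_int_mul_X_pow_triangle :
    HasSum (fun k : ℤ => C ((-1) ^ k.natAbs * (k : R)) * X ^ triangle k) (eulerProd X ^ 3) := by
  have : DiscreteTopology R[ε] := inferInstanceAs (DiscreteTopology (R × R))
  have hX : (-(C (1 + ε) * X) * -C (1 - ε) : R[ε]⟦X⟧) = X := by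
    have hε : (1 + ε) * (1 - ε) = (1 : R[ε]) := by linear_combination -eps_mul_eps (R := R)
    rw [neg_mul_neg, mul_right_comm, ← map_mul, hε, map_one, one_mul]
  have hsum := hasSum_thetaTerm (R := R[ε]) (a := -(C (1 + ε) * X)) (b := -C (1 - ε)) (by simp)
  rw [hX, tprod_mul_tprod_dualNumber, mul_assoc, ← pow_succ] at hsum
  let fst : R[ε] →+* R := (TrivSqZeroExt.fstHom R R R).toRingHom
  have hfst : PowerSeries.map fst (eulerProd X) = eulerProd X := by
    rw [map_eulerProd continuous_of_discreteTopology constantCoeff_X, map_X]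
  rw [PowerSeries.WithPiTopology.hasSum_iff_hasSum_coeff] at hsum ⊢
  intro d
  have hsnd := (hsum d).map (TrivSqZeroExt.sndHom R R) continuous_of_discreteTopology
  have hcoeff : TrivSqZeroExt.snd (coeff d (C ε * eulerProd (X : R[ε]⟦X⟧) ^ 3)) =
      coeff d (eulerProd (X : R⟦X⟧) ^ 3) := by
    rw [← hfst, ← map_pow, coeff_map, coeff_C_mul, TrivSqZeroExt.snd_mul]
    simp [fst]
  have hsign (k : ℤ) : ((-1 : R[ε]) ^ k.natAbs).fst = (-1) ^ k.natAbs := by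
    rw [TrivSqZeroExt.fst_pow, TrivSqZeroExt.fst_neg, TrivSqZeroExt.fst_one]
  convert hsnd using 1
  · ext k
    rw [Function.comp_apply, thetaTerm_dualNumber, coeff_C_mul_X_pow, coeff_C_mul_X_pow]
    split_ifs <;> simp [hsign]
  · exact hcoeff.symm

theorem hasSum_odd_mul_X_pow_triangle :
    HasSum (fun j : ℕ => C ((-1) ^ j * (2 * j + 1 : R)) * X ^ (j + 1).choose 2)
      (eulerProd X ^ 3) := by
  convert (hasSum_int_mul_X_pow_triangle R).nat_add_neg_add_one using 2 with j
  have hneg : triangle (-(j + 1)) = triangle j := by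
    have h₁ := two_mul_triangle (-(j + 1))
    have h₂ := two_mul_triangle j
    zify
    linarith
  have habs : (-(j + 1 : ℤ)).natAbs = j + 1 := by omega
  rw [hneg, habs, triangle_natCast, Int.natAbs_natCast, ← add_mul, ← map_add]
  push_cast
  ring_nf

theorem hasSum_four_mul_add_one_mul_X_pow_triangle :
    HasSum (fun m : ℤ => C (4 * m + 1 : R) * X ^ triangle (2 * m)) (eulerProd X ^ 3) := by
  convert Equiv.intEquivNat.hasSum_iff.2 (hasSum_odd_mul_X_pow_triangle R) using 1
  ext1 m
  cases m with
  | ofNat n =>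
    have hn : Equiv.intEquivNat (Int.ofNat n) = 2 * n := rfl
    rw [Function.comp_apply, hn, ← triangle_natCast, pow_mul, neg_one_sq, one_pow, one_mul]
    rw [Int.ofNat_eq_natCast]
    push_cast
    congr 3
    ring
  | negSucc n =>
    have hn : Equiv.intEquivNat (Int.negSucc n) = 2 * n + 1 := rfl
    have htriangle : triangle (2 * Int.negSucc n) = triangle (2 * n + 1 : ℕ) := by
      have h₁ := two_mul_triangle (2 * Int.negSucc n)
      have h₂ := two_mul_triangle (2 * n + 1 : ℕ)
      zify
      rw [Int.negSucc_eq] at h₁ ⊢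
      push_cast at h₂ ⊢
      linarith
    rw [Function.comp_apply, hn, htriangle, ← triangle_natCast, pow_succ, pow_mul, neg_one_sq]
    push_cast
    congr 2
    ring

end JacobiCube

section NormSums

variable {d : ℤ}

theorem isDomain_zsqrtd_of_neg (hd : d < 0) : IsDomain (ℤ√d) :=
  have : NoZeroDivisors (ℤ√d) := ⟨fun {a b} h => by
    simpa only [Zsqrtd.norm_mul, mul_eq_zero, Zsqrtd.norm_eq_zero_iff hd] using
      (Zsqrtd.norm_eq_zero_iff hd (a * b)).2 h⟩
  NoZeroDivisors.to_isDomain _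

theorem finite_norm_eq (hd : d < 0) (m : ℤ) : {α : ℤ√d | α.norm = m}.Finite := by
  have hinj : Set.InjOn (fun α : ℤ√d => (α.re, α.im)) {α | α.norm = m} :=
    fun α _ β _ h => Zsqrtd.ext (Prod.ext_iff.1 h).1 (Prod.ext_iff.1 h).2
  refine Set.Finite.of_finite_image (((Set.finite_Icc (-m) m).prod
    (Set.finite_Icc (-m) m)).subset ?_) hinj
  rintro _ ⟨α, rfl : α.norm = m, rfl⟩
  simp only [Set.mem_prod, Set.mem_Icc, Zsqrtd.norm_def]
  refine ⟨⟨?_, ?_⟩, ?_, ?_⟩ <;> nlinarith [Int.le_self_sq α.re, Int.le_self_sq α.im,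
    Int.le_self_sq (-α.re), Int.le_self_sq (-α.im)]

variable {π : ℤ√d} {M : ℤ}

theorem setOf_norm_eq_pow_succ_mul (hd : d < 0) (hπ : Prime π) (k : ℕ) :
    {α : ℤ√d | α.norm = π.norm ^ (k + 1) * M} =
      (π * ·) '' {α | α.norm = π.norm ^ k * M} ∪ (star π ^ (k + 1) * ·) '' {α | α.norm = M} := by
  have := isDomain_zsqrtd_of_neg hd
  have hnorm : π.norm ≠ 0 := (Zsqrtd.norm_eq_zero_iff hd π).not.2 hπ.ne_zero
  have hnormpow : (star π ^ (k + 1)).norm = π.norm ^ (k + 1) :=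
    Zsqrtd.norm_conj π ▸ map_pow Zsqrtd.normMonoidHom (star π) (k + 1)
  refine Set.Subset.antisymm (fun α hα => ?_) (Set.union_subset ?_ ?_)
  · by_cases hdvd : π ∣ α
    · obtain ⟨β, rfl⟩ := hdvd
      refine Or.inl ⟨β, mul_left_cancel₀ hnorm ?_, rfl⟩
      rw [← Zsqrtd.norm_mul, hα, pow_succ', mul_assoc]
    · have hprod : α * star α = π ^ (k + 1) * (star π ^ (k + 1) * M) := by
        rw [← Zsqrtd.norm_eq_mul_conj, hα, ← mul_assoc, ← mul_pow, ← Zsqrtd.norm_eq_mul_conj]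
        push_cast
        rfl
      obtain ⟨γ, hγ⟩ := hπ.pow_dvd_of_dvd_mul_left _ hdvd (Dvd.intro _ hprod.symm)
      obtain rfl : α = star π ^ (k + 1) * star γ := by
        rw [← star_pow, ← star_mul', ← hγ, star_star]
      refine Or.inr ⟨star γ, mul_left_cancel₀ (pow_ne_zero (k + 1) hnorm) ?_, rfl⟩
      rw [← hnormpow, ← Zsqrtd.norm_mul, hα, hnormpow]
  · rintro _ ⟨β, hβ : β.norm = _, rfl⟩
    rw [Set.mem_ofPred_eq, Zsqrtd.norm_mul, hβ, pow_succ', mul_assoc]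
  · rintro _ ⟨γ, hγ : γ.norm = _, rfl⟩
    rw [Set.mem_ofPred_eq, Zsqrtd.norm_mul, hγ, hnormpow]

theorem finsum_norm_eq_pow_succ_mul (hd : d < 0) (hπ : Prime π) (hstar : ¬ π ∣ star π)
    (hM : ¬ π ∣ M) {A : Type*} [AddCommMonoid A] (f : ℤ√d → A) (k : ℕ) :
    ∑ᶠ α ∈ {α : ℤ√d | α.norm = π.norm ^ (k + 1) * M}, f α =
      ∑ᶠ α ∈ {α : ℤ√d | α.norm = π.norm ^ k * M}, f (π * α) +
        ∑ᶠ α ∈ {α : ℤ√d | α.norm = M}, f (star π ^ (k + 1) * α) := by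
  have := isDomain_zsqrtd_of_neg hd
  have hstar_ne : star π ≠ 0 := fun h => by simp [h] at hstar
  have hdisj : Disjoint ((π * ·) '' {α | α.norm = π.norm ^ k * M})
      ((star π ^ (k + 1) * ·) '' {α | α.norm = M}) := by
    refine Set.disjoint_left.2 ?_
    rintro _ ⟨β, -, rfl⟩ ⟨γ, rfl : γ.norm = M, hγ : star π ^ (k + 1) * γ = π * β⟩
    rcases hπ.dvd_or_dvd (Dvd.intro _ hγ.symm) with h | h
    · exact hstar (hπ.dvd_of_dvd_pow h)
    · rw [Zsqrtd.norm_eq_mul_conj] at hM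
      exact hM (h.mul_right _)
  rw [setOf_norm_eq_pow_succ_mul hd hπ, finsum_mem_union hdisj ((finite_norm_eq hd _).image _)
    ((finite_norm_eq hd _).image _), finsum_mem_image (mul_right_injective₀ hπ.ne_zero).injOn,
    finsum_mem_image (mul_right_injective₀ (pow_ne_zero _ hstar_ne)).injOn]

theorem finsum_norm_eq_pow_mul (hd : d < 0) (hπ : Prime π) (hstar : ¬ π ∣ star π)
    (hM : ¬ π ∣ M) {A : Type*} [AddCommMonoid A] (f : ℤ√d → A) (k : ℕ) :
    ∑ᶠ α ∈ {α : ℤ√d | α.norm = π.norm ^ k * M}, f α =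
      ∑ᶠ α ∈ {α : ℤ√d | α.norm = M}, ∑ ij ∈ antidiagonal k, f (π ^ ij.1 * star π ^ ij.2 * α) := by
  induction k generalizing f with
  | zero => simp
  | succ k ih =>
    rw [finsum_norm_eq_pow_succ_mul hd hπ hstar hM, ih, add_comm,
      ← finsum_mem_add_distrib (finite_norm_eq hd M)]
    simp only [Nat.sum_antidiagonal_succ, pow_zero, one_mul, pow_succ', mul_assoc]

end NormSums

section NegTwo

theorem mk_one_one_dvd_iff (α : ℤ√(-2)) : ⟨1, 1⟩ ∣ α ↔ 3 ∣ α.re - α.im := by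
  constructor
  · rintro ⟨β, rfl⟩
    exact ⟨-β.im, by rw [Zsqrtd.re_mul, Zsqrtd.im_mul]; ring⟩
  · rintro ⟨c, hc⟩
    exact ⟨⟨α.im + c, -c⟩, Zsqrtd.ext (by simp only [Zsqrtd.re_mul]; linarith) (by simp)⟩

theorem prime_mk_one_one : Prime (⟨1, 1⟩ : ℤ√(-2)) := by
  refine ⟨fun h => ?_, fun h => ?_, fun α β h => ?_⟩
  · simp [Zsqrtd.ext_iff] at h
  · have := (mk_one_one_dvd_iff 1).1 h.dvd
    norm_num at this
  · simp only [mk_one_one_dvd_iff] at h ⊢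
    refine Int.prime_three.dvd_or_dvd ?_
    have hexpand : (α.re - α.im) * (β.re - β.im) =
        (α * β).re - (α * β).im + 3 * (α.im * β.im) := by
      rw [Zsqrtd.re_mul, Zsqrtd.im_mul]; ring
    rw [hexpand]
    exact h.add (Dvd.intro _ rfl)

/-- The weight on `ℤ[√-2]` whose sum over the elements of norm `8N + 1` is the coefficient of `X^N`
in `φ(-X) (X; X)_∞³`, where `φ(-X)` is `gaussTheta`. Such an element has odd real part and even
imaginary part; of `±α` only the one with real part `≡ 1 mod 4` is counted, with the value
`(-1)^(α.im / 2) * α.re`. -/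
def thetaWeight (α : ℤ√(-2)) : ℤ :=
  if α.re % 4 = 1 then (if α.im % 4 = 0 then α.re else -α.re) else 0

theorem odd_of_norm_mod_eight {α : ℤ√(-2)} (hα : α.norm % 8 = 3) :
    α.re % 2 = 1 ∧ α.im % 2 = 1 := by
  rw [Zsqrtd.norm_def, mul_assoc, ← sq, ← sq] at hα
  have hre : Odd α.re := (Int.odd_pow' two_ne_zero).1 (Int.odd_iff.2 (by omega))
  have hre_sq := Int.sq_mod_four_eq_one_of_odd hre
  have him : Odd α.im := (Int.odd_pow' two_ne_zero).1 (Int.odd_iff.2 (by omega))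
  exact ⟨Int.odd_iff.1 hre, Int.odd_iff.1 him⟩

theorem sum_thetaWeight_eq {α : ℤ√(-2)} (hα : α.norm % 8 = 3) :
    ∑ ij ∈ antidiagonal 3, thetaWeight (⟨1, 1⟩ ^ ij.1 * star ⟨1, 1⟩ ^ ij.2 * α) =
      if α.re % 4 = 1 then (if α.im % 4 = 1 then 8 * α.im else -(8 * α.im)) else 0 := by
  obtain ⟨hre, him⟩ := odd_of_norm_mod_eight hα
  have hsum (w : ℤ√(-2) → ℤ) :
      ∑ ij ∈ antidiagonal 3, w (⟨1, 1⟩ ^ ij.1 * star ⟨1, 1⟩ ^ ij.2 * α) =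
        w (⟨-5, -1⟩ * α) + (w (⟨3, -3⟩ * α) + (w (⟨3, 3⟩ * α) + w (⟨-5, 1⟩ * α))) := by
    simp only [Nat.sum_antidiagonal_succ, Nat.antidiagonal_zero, sum_singleton]
    rfl
  rw [hsum thetaWeight]
  simp only [thetaWeight, Zsqrtd.re_mul, Zsqrtd.im_mul]
  omega

theorem eight_dvd_finsum_thetaWeight {M : ℤ} (hM : M % 8 = 3) (h3 : ¬ 3 ∣ M) :
    8 ∣ ∑ᶠ α ∈ {α : ℤ√(-2) | α.norm = 27 * M}, thetaWeight α := by
  have hstar : ¬ (⟨1, 1⟩ : ℤ√(-2)) ∣ star ⟨1, 1⟩ := by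
    rw [mk_one_one_dvd_iff]; norm_num
  have hπM : ¬ (⟨1, 1⟩ : ℤ√(-2)) ∣ M := by
    rw [mk_one_one_dvd_iff]; simpa
  have h27 : (⟨1, 1⟩ : ℤ√(-2)).norm ^ 3 = 27 := by norm_num [Zsqrtd.norm_def]
  rw [← h27, finsum_norm_eq_pow_mul (by norm_num) prime_mk_one_one hstar hπM]
  refine finsum_mem_induction (8 ∣ ·) (dvd_zero 8) (fun _ _ => dvd_add) ?_
  rintro α rfl
  rw [sum_thetaWeight_eq hM]
  split_ifs
  exacts [Dvd.intro _ rfl, (Dvd.intro _ rfl).neg_right, dvd_zero 8]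

end NegTwo

section Coefficient

theorem bijOn_norm_eq (N : ℕ) :
    Set.BijOn (fun p : ℤ × ℤ => (⟨4 * p.2 + 1, 2 * p.1⟩ : ℤ√(-2)))
      {p | p.1.natAbs ^ 2 + triangle (2 * p.2) = N} {α | α.norm = 8 * N + 1 ∧ α.re % 4 = 1} := by
  have hiff (k m : ℤ) : (⟨4 * m + 1, 2 * k⟩ : ℤ√(-2)).norm = 8 * N + 1 ↔
      k.natAbs ^ 2 + triangle (2 * m) = N := by
    have htriangle := two_mul_triangle (2 * m)
    zify
    rw [sq_abs, Zsqrtd.norm_def]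
    constructor <;> intro h <;> linarith
  refine ⟨fun p hp => ⟨(hiff _ _).2 hp, by simp only; omega⟩, fun p _ p' _ h => ?_, ?_⟩
  · simp only [Zsqrtd.mk.injEq] at h
    ext <;> omega
  · rintro ⟨x, y⟩ ⟨hnorm, hx : x % 4 = 1⟩
    have hy : Even y := by
      have hsq : x ^ 2 + 2 * y ^ 2 = 8 * N + 1 := by
        rw [← hnorm, Zsqrtd.norm_def]
        ring
      have := Int.sq_mod_four_eq_one_of_odd (x := x) (by rw [Int.odd_iff]; omega)
      exact (Int.even_pow' two_ne_zero).1 (Int.even_iff.2 (by omega))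
    obtain ⟨k, rfl⟩ := hy.two_dvd
    obtain ⟨m, rfl⟩ : ∃ m, x = 4 * m + 1 := ⟨x / 4, by omega⟩
    exact ⟨(k, m), (hiff k m).1 hnorm, rfl⟩

theorem thetaWeight_mk (k m : ℤ) :
    thetaWeight ⟨4 * m + 1, 2 * k⟩ = (-1) ^ k.natAbs * (4 * m + 1) := by
  have hre : (4 * m + 1) % 4 = 1 := by omega
  rw [thetaWeight, if_pos hre]
  have him : 2 * k % 4 = 0 ↔ Even k := by
    rw [Int.even_iff]
    omega
  rcases Int.even_or_odd k with hk | hk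
  · rw [(Int.natAbs_even.2 hk).neg_one_pow, one_mul, if_pos (him.2 hk)]
  · rw [(Int.natAbs_odd.2 hk).neg_one_pow, neg_one_mul,
      if_neg (him.not.2 (Int.not_even_iff_odd.2 hk))]

theorem hasSum_thetaWeight :
    HasSum (fun p : ℤ × ℤ => C (thetaWeight ⟨4 * p.2 + 1, 2 * p.1⟩) *
      X ^ (p.1.natAbs ^ 2 + triangle (2 * p.2))) (gaussTheta ℤ * eulerProd X ^ 3) := by
  convert hasSum_powerSeries_mul (hasSum_gaussTheta ℤ)
    (hasSum_four_mul_add_one_mul_X_pow_triangle ℤ) using 2 with p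
  simp only [thetaWeight_mk, map_mul, map_pow, map_neg, map_one, pow_add, Int.cast_id]
  ring

theorem coeff_gaussTheta_mul_eulerProd_cube (N : ℕ) :
    coeff N (gaussTheta ℤ * eulerProd X ^ 3) =
      ∑ᶠ α ∈ {α : ℤ√(-2) | α.norm = 8 * N + 1}, thetaWeight α := by
  have hsum := (PowerSeries.WithPiTopology.hasSum_iff_hasSum_coeff ℤ).1 hasSum_thetaWeight N
  calc coeff N (gaussTheta ℤ * eulerProd X ^ 3)
      = ∑ᶠ p ∈ {p : ℤ × ℤ | p.1.natAbs ^ 2 + triangle (2 * p.2) = N},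
          thetaWeight ⟨4 * p.2 + 1, 2 * p.1⟩ := by
        rw [← hsum.tsum_eq, tsum_eq_finsum hsum.summable.hasFiniteSupport_of_discreteTopology]
        refine finsum_congr fun p => ?_
        rw [coeff_C_mul_X_pow, ← finsum_eq_if]
        simp only [Set.mem_ofPred_eq, eq_comm]
    _ = ∑ᶠ α ∈ {α : ℤ√(-2) | α.norm = 8 * N + 1 ∧ α.re % 4 = 1}, thetaWeight α :=
        finsum_mem_eq_of_bijOn _ (bijOn_norm_eq N) fun _ _ => rfl
    _ = ∑ᶠ α ∈ {α : ℤ√(-2) | α.norm = 8 * N + 1}, thetaWeight α :=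
        finsum_mem_inter_support_eq' _ _ _ fun α hα =>
          and_iff_left (by by_contra h; exact hα (if_neg h))

end Coefficient

theorem eight_dvd_Tcount_sub_coeff (N : ℕ) :
    (8 : ℤ) ∣ Tcount 2 3 N - coeff N (gaussTheta ℤ * eulerProd X ^ 3) := by
  obtain ⟨s, hs⟩ := exists_gaussTheta_eq_one_add_two_mul ℤ
  have hcube : gaussTheta ℤ * eulerProd X ^ 3 = regularGenFun ℤ 2 ^ 3 +
      C 8 * ((s + 3 * s ^ 2 + 4 * s ^ 3 + 2 * s ^ 4) * regularGenFun ℤ 2 ^ 3) := by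
    have h8 : (C 8 : ℤ⟦X⟧) = 8 := map_ofNat C 8
    rw [← gaussTheta_mul_regularGenFun_two, hs, h8]
    ring
  rw [hcube, map_add, coeff_C_mul, coeff_regularGenFun_pow, sub_add_cancel_left]
  exact (Dvd.intro _ rfl).neg_right

theorem eight_dvd_Tcount {N M : ℕ} (hN : 8 * N + 1 = 27 * M) (hM : M % 8 = 3) (h3 : ¬ 3 ∣ M) :
    8 ∣ Tcount 2 3 N := by
  have h := eight_dvd_Tcount_sub_coeff N
  have hnorm : (8 * N + 1 : ℤ) = 27 * M := mod_cast hN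
  rw [coeff_gaussTheta_mul_eulerProd_cube, hnorm] at h
  have hsum : (8 : ℤ) ∣ ∑ᶠ α ∈ {α : ℤ√(-2) | α.norm = 27 * M}, thetaWeight α :=
    eight_dvd_finsum_thetaWeight (mod_cast hM) (mod_cast h3)
  exact Int.natCast_dvd_natCast.1 ((dvd_iff_dvd_of_dvd_sub h).2 hsum)

theorem stmt5 (n : ℕ) :
    24 ∣ Tcount 2 3 (81 * n + 37) ∧ 24 ∣ Tcount 2 3 (81 * n + 64) := by
  have h24 {N M : ℕ} (hN : 8 * N + 1 = 27 * M) (hM : M % 8 = 3) (h3 : ¬ 3 ∣ M) :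
      24 ∣ Tcount 2 3 N :=
    Nat.Coprime.mul_dvd_of_dvd_of_dvd (m := 3) (n := 8) (by norm_num)
      (prime_dvd_Tcount Nat.prime_three (by omega) 2) (eight_dvd_Tcount hN hM h3)
  exact ⟨h24 (M := 24 * n + 11) (by omega) (by omega) (by omega),
    h24 (M := 24 * n + 19) (by omega) (by omega) (by omega)⟩
end
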